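/- There exist real matrices K_i ∈ ℝ^{n×p_i} and H_{ij} ∈ ℝ^{n×n} (j ∈ 𝒩_i, i = 1,…,m) such that for every q ∈ {1,…,m}, the open-loop error system ė_i = (A+K_iC_i)e_i + Σ_{j∈𝒩_i} H_{ij}(e_i − e_j) + Σ_{j=1}^m B_jF_j(e_i − e_j) + δ_{iq} ũ_q (i = 1,…,m), with composite state ε = col{e_1,…,e_m} ∈ ℝ^{nm}, input ũ_q ∈ ℝ^n entering only channel q, and output ỹ_q = col{C_q e_q, e_q − e_{j^q_1}, …, e_q − e_{j^q_{k_q}}} where {j^q_1,…,j^q_{k_q}} = 𝒩_q, is controllable by ũ_q with controllability index m and observable through ỹ_q. Equivalently, with M = Ã + Σ_{i=1}^m B̃_i(K_i Ĉ_i + H_i C̃_i), the pair (M, B̃_q) is controllable with controllability index m and the pair (col{Ĉ_q, C̃_q}, M) is observable, for every q ∈ {1,…,m}. -/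

import Mathlib

open Matrix Finset

/-- The controllability matrix `[B, AB, …, A^{k-1}B]` of the pair `(A, B)`. -/
def ctrbMat {ι κ : Type*} [Fintype ι] [DecidableEq ι]
    (A : Matrix ι ι ℝ) (B : Matrix ι κ ℝ) (k : ℕ) : Matrix ι (Fin k × κ) ℝ :=
  Matrix.of fun i p => ((A ^ (p.1 : ℕ)) * B) i p.2

/-- `(A, B)` is controllable if its controllability matrix has full rank. -/
def Controllable {ι κ : Type*} [Fintype ι] [DecidableEq ι] [Fintype κ]
    (A : Matrix ι ι ℝ) (B : Matrix ι κ ℝ) : Prop :=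
  (ctrbMat A B (Fintype.card ι)).rank = Fintype.card ι

/-- The controllability index: the smallest positive `k` with
`rank [B, AB, …, A^{k-1}B]` full. -/
noncomputable def ctrlIndex {ι κ : Type*} [Fintype ι] [DecidableEq ι] [Fintype κ]
    (A : Matrix ι ι ℝ) (B : Matrix ι κ ℝ) : ℕ :=
  sInf {k | 0 < k ∧ (ctrbMat A B k).rank = Fintype.card ι}

/-- `(C, A)` is observable iff `(Aᵀ, Cᵀ)` is controllable. -/
def Observable {ι κ : Type*} [Fintype ι] [DecidableEq ι] [Fintype κ]
    (C : Matrix κ ι ℝ) (A : Matrix ι ι ℝ) : Prop :=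
  Controllable Aᵀ Cᵀ

/-- `B̃ᵢ = bᵢ ⊗ Iₙ`. -/
def Btil (n : ℕ) {m : ℕ} (i : Fin m) : Matrix (Fin m × Fin n) (Fin n) ℝ :=
  Matrix.of fun p l => if p.1 = i ∧ p.2 = l then (1 : ℝ) else 0

/-- `Ã = I_m ⊗ (A + Σⱼ BⱼFⱼ) − Q`, where the `(i,j)` block of `Q` is `BⱼFⱼ`. -/
def Atil {n m : ℕ} {mdim : Fin m → ℕ} (A : Matrix (Fin n) (Fin n) ℝ)
    (B : ∀ i : Fin m, Matrix (Fin n) (Fin (mdim i)) ℝ)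
    (F : ∀ i : Fin m, Matrix (Fin (mdim i)) (Fin n) ℝ) :
    Matrix (Fin m × Fin n) (Fin m × Fin n) ℝ :=
  Matrix.of fun p p' =>
    (if p.1 = p'.1 then (A + ∑ j : Fin m, B j * F j) p.2 p'.2 else 0)
      - (B p'.1 * F p'.1) p.2 p'.2

/-- `C̃ᵢ`, the stack of the matrices `C_{ij} = c_{ij} ⊗ Iₙ` over the neighbors
`j ∈ 𝒩ᵢ`, where `c_{ij}` has `+1` in position `i`, `−1` in position `j`
(so `c_{ii} = 0` for the self-loop). -/
def Ctil (n : ℕ) {m : ℕ} (adj : Fin m → Fin m → Prop) [DecidableRel adj] (i : Fin m) :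
    Matrix ({j // adj j i} × Fin n) (Fin m × Fin n) ℝ :=
  Matrix.of fun r p =>
    ((if p.1 = i then (1 : ℝ) else 0) - (if p.1 = (r.1 : Fin m) then 1 else 0))
      * (if r.2 = p.2 then 1 else 0)

/-- `Hᵢ = [H_{ij¹} … H_{ijᵏ}]`, the row block of the matrices `H_{ij}`, `j ∈ 𝒩ᵢ`. -/
def Hblk {n m : ℕ} (adj : Fin m → Fin m → Prop) [DecidableRel adj]
    (H : Fin m → Fin m → Matrix (Fin n) (Fin n) ℝ) (i : Fin m) :
    Matrix (Fin n) ({j // adj j i} × Fin n) ℝ :=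
  Matrix.of fun k r => H i (r.1 : Fin m) k r.2

/-!
The gains for which the error system is controllable in `m` steps from `B̃_q`, and those for which
it is observable through channel `q`, are the complements of real algebraic sets. Generic gains
therefore do everything at once, provided each of these `2m` properties holds for some gains.

*Controllability.* Let the couplings follow a spanning tree rooted at `q`, with distinct weights.
The weighted tree Laplacian is controllable from its root by a single input, hence its Kronecker
product with `Iₙ` is controllable from `B̃_q` in `m` steps. Large gains dominate `Ã`. No smaller
index is possible, since `B̃_q` has `n` columns and the state has dimension `nm`.

*Observability.* Take `Kᵢ = Cᵢᵀ` and couplings `(dᵢ / s) Iₙ` with `s → 0`. By the Hautus test,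
failure for all small `s` yields a limit of modes hidden from channel `q`: either a mode of the
weighted Laplacian grounded at `q` that the neighbours of `q` do not see, which suitable `dᵢ`
exclude, or an eigenvector `v` of `A` with `L z = -(Cᵢᵀ Cᵢ v)ᵢ`, `L` the weighted Laplacian. A
maximum principle then makes every `Cᵢᵀ Cᵢ v` zero, so that `v = 0` by joint observability.
-/

section ControllabilityMatrix

theorem rank_eq_card_iff_linearIndependent_row {ι κ : Type*} [Fintype ι] [Fintype κ]
    (M : Matrix ι κ ℝ) : M.rank = Fintype.card ι ↔ LinearIndependent ℝ M.row := by
  rw [linearIndependent_iff_card_eq_finrank_span, M.rank_eq_finrank_span_row, eq_comm, Set.finrank]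

variable {ι κ : Type*} [Fintype ι] [DecidableEq ι] [Fintype κ]
  {A : Matrix ι ι ℝ} {B : Matrix ι κ ℝ} {C : Matrix κ ι ℝ} {k l : ℕ}

theorem rank_ctrbMat_eq_card_iff :
    (ctrbMat A B k).rank = Fintype.card ι ↔
      ∀ y : ι → ℝ, (∀ j < k, y ᵥ* (A ^ j * B) = 0) → y = 0 := by
  rw [rank_eq_card_iff_linearIndependent_row, ← vecMul_injective_iff, ← coe_vecMulLinear,
    injective_iff_map_eq_zero]
  refine forall_congr' fun y => imp_congr_left ?_
  simp only [vecMulLinear_apply, funext_iff, Prod.forall, Fin.forall_iff]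
  rfl

theorem rank_ctrbMat_eq_card_of_le (hkl : k ≤ l) (h : (ctrbMat A B k).rank = Fintype.card ι) :
    (ctrbMat A B l).rank = Fintype.card ι := by
  rw [rank_ctrbMat_eq_card_iff] at h ⊢
  exact fun y hy => h y fun j hj => hy j (hj.trans_le hkl)

theorem rank_ctrbMat_smul_eq_card {s : ℝ} (hs : s ≠ 0)
    (h : (ctrbMat A B k).rank = Fintype.card ι) :
    (ctrbMat (s • A) B k).rank = Fintype.card ι := by
  rw [rank_ctrbMat_eq_card_iff] at h ⊢
  refine fun y hy => h y fun j hj => ?_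
  have hyj := hy j hj
  rwa [smul_pow, Matrix.smul_mul, vecMul_smul, smul_eq_zero_iff_right (pow_ne_zero j hs)] at hyj

theorem ctrlIndex_eq_of_card_eq_mul (hk : 0 < k) (hκ : 0 < Fintype.card κ)
    (hcard : Fintype.card ι = k * Fintype.card κ)
    (h : (ctrbMat A B k).rank = Fintype.card ι) : ctrlIndex A B = k := by
  refine le_antisymm (Nat.sInf_le ⟨hk, h⟩) (le_csInf ⟨k, hk, h⟩ fun l ⟨_, hl⟩ => ?_)
  have hwidth := (ctrbMat A B l).rank_le_card_width
  rw [hl, hcard, Fintype.card_prod, Fintype.card_fin] at hwidth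
  exact Nat.le_of_mul_le_mul_right hwidth hκ

theorem observable_iff :
    Observable C A ↔ ∀ x : ι → ℝ, (∀ j < Fintype.card ι, C *ᵥ (A ^ j *ᵥ x) = 0) → x = 0 := by
  rw [Observable, Controllable, rank_ctrbMat_eq_card_iff]
  refine forall_congr' fun x => imp_congr_left <| forall₂_congr fun j _ => ?_
  rw [← transpose_pow, ← transpose_mul, vecMul_transpose, mulVec_mulVec]

theorem pow_mem_span_pow_lt_card (A : Matrix ι ι ℝ) (k : ℕ) :
    A ^ k ∈ Submodule.span ℝ ((A ^ ·) '' Set.Iio (Fintype.card ι)) := by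
  nontriviality Matrix ι ι ℝ
  rw [Matrix.pow_eq_aeval_mod_charpoly, Polynomial.aeval_eq_sum_range' (n := Fintype.card ι)]
  · exact Submodule.sum_mem _ fun j hj => Submodule.smul_mem _ _ <|
      Submodule.subset_span ⟨j, Finset.mem_range.1 hj, rfl⟩
  · rw [← A.charpoly_natDegree_eq_dim]
    refine Polynomial.natDegree_modByMonic_lt _ A.charpoly_monic fun hone => ?_
    have hcard := A.charpoly_natDegree_eq_dim
    rw [hone, Polynomial.natDegree_one, eq_comm, Fintype.card_eq_zero_iff] at hcard
    exact not_subsingleton (Matrix ι ι ℝ) inferInstance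

theorem observable_iff_forall_pow :
    Observable C A ↔ ∀ x : ι → ℝ, (∀ j, C *ᵥ (A ^ j *ᵥ x) = 0) → x = 0 := by
  rw [observable_iff]
  refine forall_congr' fun x => imp_congr_left ⟨fun h k => ?_, fun h j _ => h j⟩
  have hspan : ∀ X ∈ Submodule.span ℝ ((A ^ ·) '' Set.Iio (Fintype.card ι)), C *ᵥ (X *ᵥ x) = 0 := by
    intro X hX
    induction hX using Submodule.span_induction with
    | mem _ hX =>
      obtain ⟨j, hj, rfl⟩ := hX
      exact h j hj
    | zero => rw [zero_mulVec, mulVec_zero]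
    | add X Y _ _ hX hY => rw [Matrix.add_mulVec, mulVec_add, hX, hY, add_zero]
    | smul c X _ hX => rw [Matrix.smul_mulVec, mulVec_smul, hX, smul_zero]
  exact hspan _ (pow_mem_span_pow_lt_card A k)

end ControllabilityMatrix

section Hautus

theorem eq_zero_of_forall_pow_of_eigenvector {K V W : Type*} [Field K] [IsAlgClosed K]
    [AddCommGroup V] [Module K V] [FiniteDimensional K V] [AddCommGroup W] [Module K W]
    {f : Module.End K V} {g : V →ₗ[K] W} (h : ∀ (μ : K) (v : V), f v = μ • v → g v = 0 → v = 0)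
    {x : V} (hx : ∀ j, g ((f ^ j) x) = 0) : x = 0 := by
  let U : Submodule K V := ⨅ j, LinearMap.ker (g ∘ₗ f ^ j)
  have mem_U {y : V} : y ∈ U ↔ ∀ j, g ((f ^ j) y) = 0 := by simp [U]
  have hf : ∀ y ∈ U, f y ∈ U := fun y hy => mem_U.2 fun j => mem_U.1 hy (j + 1)
  suffices hU : Subsingleton U from
    congrArg Subtype.val (Subsingleton.elim (⟨x, mem_U.2 hx⟩ : U) 0)
  by_contra hU
  rw [not_subsingleton_iff_nontrivial] at hU
  obtain ⟨μ, hμ⟩ := Module.End.exists_eigenvalue (f.restrict hf)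
  obtain ⟨v, hv⟩ := hμ.exists_hasEigenvector
  exact hv.2 <| Subtype.ext <|
    h μ v (congrArg Subtype.val hv.apply_eq_smul) (mem_U.1 v.2 0)

variable {ι κ : Type*} [Fintype ι]

theorem linearMap_comp_map_ofReal_mulVec (ℓ : ℂ →ₗ[ℝ] ℝ) (A : Matrix κ ι ℝ) (v : ι → ℂ) :
    ℓ ∘ (A.map Complex.ofReal *ᵥ v) = A *ᵥ (ℓ ∘ v) := by
  funext k
  simp [mulVec, dotProduct, ← Complex.real_smul]

theorem eq_of_forall_linearMap_comp_eq {v w : κ → ℂ} (h : ∀ ℓ : ℂ →ₗ[ℝ] ℝ, ℓ ∘ v = ℓ ∘ w) :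
    v = w :=
  funext fun k => Complex.ext (congrFun (h Complex.reLm) k) (congrFun (h Complex.imLm) k)

theorem map_ofReal_mulVec_ofReal_comp (A : Matrix κ ι ℝ) (x : ι → ℝ) :
    A.map Complex.ofReal *ᵥ (Complex.ofReal ∘ x) = Complex.ofReal ∘ (A *ᵥ x) :=
  funext fun k => (RingHom.map_mulVec Complex.ofRealHom A x k).symm

theorem observable_iff_hautus [DecidableEq ι] [Fintype κ] {A : Matrix ι ι ℝ} {C : Matrix κ ι ℝ} :
    Observable C A ↔ ∀ (μ : ℂ) (v : ι → ℂ), A.map Complex.ofReal *ᵥ v = μ • v →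
      C.map Complex.ofReal *ᵥ v = 0 → v = 0 := by
  rw [observable_iff_forall_pow]
  constructor
  · intro h μ v hv hC
    refine eq_of_forall_linearMap_comp_eq fun ℓ => ?_
    have hℓ : ℓ ∘ (0 : ι → ℂ) = 0 := map_zero (ℓ.compLeft ι)
    refine (h _ fun j => ?_).trans hℓ.symm
    have hpow : A ^ j *ᵥ (ℓ ∘ v) = ℓ ∘ (μ ^ j • v) := by
      induction j with
      | zero => simp
      | succ j ih =>
        rw [pow_succ', ← mulVec_mulVec, ih, ← linearMap_comp_map_ofReal_mulVec, mulVec_smul, hv,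
          smul_smul, pow_succ]
    rw [hpow, ← linearMap_comp_map_ofReal_mulVec, mulVec_smul, hC, smul_zero]
    exact map_zero (ℓ.compLeft κ)
  · intro h x hx
    have hpow (j : ℕ) : ((A.map Complex.ofReal).mulVecLin ^ j) (Complex.ofReal ∘ x) =
        Complex.ofReal ∘ (A ^ j *ᵥ x) := by
      induction j with
      | zero => simp
      | succ j ih =>
        rw [pow_succ', Module.End.mul_apply, ih, mulVecLin_apply, map_ofReal_mulVec_ofReal_comp,
          mulVec_mulVec, ← pow_succ']
    have hzero : Complex.ofReal ∘ x = 0 :=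
      eq_zero_of_forall_pow_of_eigenvector (f := (A.map Complex.ofReal).mulVecLin)
        (g := (C.map Complex.ofReal).mulVecLin) h fun j => by
          rw [hpow, mulVecLin_apply, map_ofReal_mulVec_ofReal_comp, hx j]
          exact funext fun _ => Complex.ofReal_zero
    exact funext fun k => Complex.ofReal_eq_zero.1 (congrFun hzero k)

end Hautus

section Genericity

variable {X : Type*} [AddCommGroup X] [Module ℝ X]

/-- An algebraic form of genericity on a real vector space: along every line, `P` holds exactly off
the zero set of a polynomial. Restricting to lines avoids coordinates on `X`. -/
def PolynomiallyOpen (P : X → Prop) : Prop :=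
  ∀ a b, ∃ p : Polynomial ℝ, ∀ t : ℝ, P (a + t • b) ↔ p.eval t ≠ 0

theorem PolynomiallyOpen.and {P Q : X → Prop} (hP : PolynomiallyOpen P)
    (hQ : PolynomiallyOpen Q) : PolynomiallyOpen fun x => P x ∧ Q x := fun a b => by
  obtain ⟨p, hp⟩ := hP a b
  obtain ⟨q, hq⟩ := hQ a b
  refine ⟨p * q, fun t => ?_⟩
  rw [Polynomial.eval_mul, mul_ne_zero_iff]
  exact and_congr (hp t) (hq t)

theorem PolynomiallyOpen.exists_and {P Q : X → Prop} (hP : PolynomiallyOpen P)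
    (hQ : PolynomiallyOpen Q) (hPx : ∃ x, P x) (hQx : ∃ x, Q x) : ∃ x, P x ∧ Q x := by
  obtain ⟨x, hx⟩ := hPx
  obtain ⟨y, hy⟩ := hQx
  obtain ⟨p, hp⟩ := hP x (y - x)
  obtain ⟨q, hq⟩ := hQ x (y - x)
  have hp0 : p ≠ 0 := by
    rintro rfl
    exact (hp 0).1 (by simpa using hx) Polynomial.eval_zero
  have hq0 : q ≠ 0 := by
    rintro rfl
    exact (hq 1).1 (by simpa using hy) Polynomial.eval_zero
  obtain ⟨t, ht⟩ : ∃ t, (p * q).eval t ≠ 0 := by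
    by_contra! h
    exact mul_ne_zero hp0 hq0 (Polynomial.funext fun t => by rw [h t, Polynomial.eval_zero])
  rw [Polynomial.eval_mul, mul_ne_zero_iff] at ht
  exact ⟨_, (hp t).2 ht.1, (hq t).2 ht.2⟩

theorem PolynomiallyOpen.exists_forall {ι : Type*} [Finite ι] {P : ι → X → Prop}
    (hP : ∀ i, PolynomiallyOpen (P i)) (hPx : ∀ i, ∃ x, P i x) : ∃ x, ∀ i, P i x := by
  classical
  have := Fintype.ofFinite ι
  suffices h : ∀ s : Finset ι, (PolynomiallyOpen fun x => ∀ i ∈ s, P i x) ∧ ∃ x, ∀ i ∈ s, P i x from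
    (h univ).2.imp fun x hx i => hx i (mem_univ i)
  intro s
  induction s using Finset.induction_on with
  | empty => exact ⟨fun _ _ => ⟨1, by simp⟩, 0, by simp⟩
  | insert i s _ ih =>
    simp only [Finset.forall_mem_insert]
    exact ⟨(hP i).and ih.1, (hP i).exists_and ih.1 (hPx i) ih.2⟩

theorem polynomiallyOpen_ne_zero : PolynomiallyOpen fun s : ℝ => s ≠ 0 := fun a b =>
  ⟨Polynomial.C a + Polynomial.C b * Polynomial.X, fun t => by simp [mul_comm b]⟩

variable {ι κ : Type*} [Fintype ι] [DecidableEq ι] [Fintype κ]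

theorem rank_eq_card_iff_det_self_mul_transpose_ne_zero (M : Matrix ι κ ℝ) :
    M.rank = Fintype.card ι ↔ (M * Mᵀ).det ≠ 0 := by
  rw [← rank_self_mul_transpose, rank_eq_card_iff_linearIndependent_row,
    linearIndependent_rows_iff_isUnit, isUnit_iff_isUnit_det, isUnit_iff_ne_zero]

theorem polynomiallyOpen_rank_ctrbMat (M : Matrix ι ι ℝ) (Λ : X →ₗ[ℝ] Matrix ι ι ℝ)
    (B : Matrix ι κ ℝ) (k : ℕ) :
    PolynomiallyOpen fun x => (ctrbMat (M + Λ x) B k).rank = Fintype.card ι := by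
  intro a b
  let N : Matrix ι ι (Polynomial ℝ) :=
    (M + Λ a).map Polynomial.C + (Polynomial.X : Polynomial ℝ) • (Λ b).map Polynomial.C
  let R : Matrix ι (Fin k × κ) (Polynomial ℝ) :=
    of fun i p => (N ^ (p.1 : ℕ) * B.map Polynomial.C) i p.2
  refine ⟨(R * Rᵀ).det, fun t => ?_⟩
  let φ := Polynomial.evalRingHom t
  have hN : N.map φ = M + Λ (a + t • b) := by
    ext i j
    simp [N, φ, add_assoc, mul_comm t]
  have hB : (B.map Polynomial.C).map φ = B := by
    ext i j
    simp [φ]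
  have hR : R.map φ = ctrbMat (M + Λ (a + t • b)) B k := by
    ext i p
    have hpow : (N ^ (p.1 : ℕ) * B.map Polynomial.C).map φ =
        (M + Λ (a + t • b)) ^ (p.1 : ℕ) * B := by
      rw [Matrix.map_mul, hB, Matrix.map_pow, hN]
    exact congrFun₂ hpow i p.2
  refine (rank_eq_card_iff_det_self_mul_transpose_ne_zero _).trans ?_
  rw [← hR, ← Polynomial.coe_evalRingHom, RingHom.map_det, RingHom.mapMatrix_apply,
    Matrix.map_mul, transpose_map]

theorem polynomiallyOpen_observable (M : Matrix ι ι ℝ) (Λ : X →ₗ[ℝ] Matrix ι ι ℝ)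
    (C : Matrix κ ι ℝ) : PolynomiallyOpen fun x => Observable C (M + Λ x) := by
  simpa [Observable, Controllable] using polynomiallyOpen_rank_ctrbMat Mᵀ
    ((transposeLinearEquiv ι ι ℝ ℝ).toLinearMap ∘ₗ Λ) Cᵀ (Fintype.card ι)

end Genericity

section Limits

theorem exists_eq_smul_of_tendsto_smul {α X : Type*} [NormedAddCommGroup X] [NormedSpace ℂ X]
    {l : Filter α} [l.NeBot] {c : α → ℂ} {u : α → X} {x y : X} (hx : x ≠ 0)
    (hu : Filter.Tendsto u l (nhds x)) (hy : Filter.Tendsto (fun s => c s • u s) l (nhds y)) :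
    ∃ c₀ : ℂ, y = c₀ • x := by
  obtain ⟨f, hf⟩ := SeparatingDual.exists_eq_one (R := ℂ) hx
  have hfu : Filter.Tendsto (fun s => f (u s)) l (nhds 1) :=
    hf ▸ (f.continuous.tendsto x).comp hu
  have hc : Filter.Tendsto (fun s => c s * f (u s)) l (nhds (f y)) := by
    simpa [Function.comp_def] using (f.continuous.tendsto y).comp hy
  have hdiv : Filter.Tendsto c l (nhds (f y)) := by
    have h := hc.div hfu one_ne_zero
    rw [div_one] at h
    refine h.congr' ?_
    filter_upwards [hfu.eventually_ne one_ne_zero] with s hs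
    exact mul_div_cancel_right₀ _ hs
  exact ⟨f y, tendsto_nhds_unique hy (hdiv.smul hu)⟩

/-- Otherwise normalised nonzero solutions accumulate, along an ultrafilter, on the unit sphere. -/
theorem eventually_forall_eq_zero_of_ultrafilter {α β X : Type*} [NormedAddCommGroup X]
    [NormedSpace ℝ X] [ProperSpace X] {l : Filter α} {P : α → β → X → Prop}
    (hsmul : ∀ s b x (c : ℝ), P s b x → P s b (c • x))
    (hlim : ∀ 𝓤 : Ultrafilter α, ↑𝓤 ≤ l → ∀ (b : α → β) (u : α → X) (x : X),
      (∀ᶠ s in 𝓤, P s (b s) (u s)) → Filter.Tendsto u 𝓤 (nhds x) → x = 0) :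
    ∀ᶠ s in l, ∀ b x, P s b x → x = 0 := by
  by_contra hfreq
  have hunit : ∃ᶠ s in l, ∃ bx : β × X, P s bx.1 bx.2 ∧ ‖bx.2‖ = 1 := by
    refine (Filter.not_eventually.1 hfreq).mono fun s hs => ?_
    push Not at hs
    obtain ⟨b, x, hPx, hx⟩ := hs
    exact ⟨(b, ‖x‖⁻¹ • x), hsmul _ _ _ _ hPx, norm_smul_inv_norm hx⟩
  have := Filter.frequently_iff_neBot.1 hunit
  let 𝓤 := Ultrafilter.of (l ⊓ Filter.principal {s | ∃ bx : β × X, P s bx.1 bx.2 ∧ ‖bx.2‖ = 1})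
  have h𝓤 : ∀ᶠ s in 𝓤, ∃ bx : β × X, P s bx.1 bx.2 ∧ ‖bx.2‖ = 1 :=
    Filter.mem_inf_of_right (Filter.mem_principal_self _) |> Ultrafilter.of_le _
  have : Nonempty (β × X) := let ⟨_, bx, _⟩ := h𝓤.exists; ⟨bx⟩
  obtain ⟨bu, hbu⟩ := h𝓤.choice
  have hsphere : Filter.Tendsto (fun s => (bu s).2) 𝓤 (Filter.principal (Metric.sphere 0 1)) :=
    Filter.tendsto_principal.2 (hbu.mono fun s hs => mem_sphere_zero_iff_norm.2 hs.2)
  obtain ⟨x, hx, hux⟩ := (isCompact_sphere (0 : X) 1).ultrafilter_le_nhds (𝓤.map _) hsphere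
  have hx0 := hlim 𝓤 ((Ultrafilter.of_le _).trans inf_le_left) _ _ x
    (hbu.mono fun s => And.left) hux
  simp [hx0] at hx

end Limits

section SpanningTree

variable {V : Type*}

/-- A spanning tree of the directed graph `r` grown from the root `q`, encoded by the parent map and
a rank that decreases towards the root; the root is its own parent. -/
structure IsSpanningTree (r : V → V → Prop) (q : V) (par : V → V) (dep : V → ℕ) : Prop where
  parent_root : par q = q
  rel_parent : ∀ i, i ≠ q → r (par i) i
  depth_parent_lt : ∀ i, i ≠ q → dep (par i) < dep i

theorem exists_isSpanningTree {r : V → V → Prop} {q : V}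
    (h : ∀ i, Relation.ReflTransGen r q i) : ∃ par dep, IsSpanningTree r q par dep := by
  classical
  let Walk : ℕ → V → Prop := Nat.rec (motive := fun _ => V → Prop) (· = q)
    fun _ W i => ∃ p, W p ∧ r p i
  have exists_walk (i : V) : ∃ n, Walk n i := by
    induction h i with
    | refl => exact ⟨0, rfl⟩
    | tail _ hr ih => exact ih.elim fun n hn => ⟨n + 1, _, hn, hr⟩
  let dep (i : V) : ℕ := Nat.find (exists_walk i)
  have exists_parent (i : V) (hi : i ≠ q) : ∃ p, r p i ∧ dep p < dep i := by
    have hwalk := Nat.find_spec (exists_walk i)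
    generalize hn : Nat.find (exists_walk i) = n at hwalk
    cases n with
    | zero => exact absurd hwalk hi
    | succ n =>
      obtain ⟨p, hp, hr⟩ := hwalk
      exact ⟨p, hr, (Nat.find_min' _ hp).trans_lt (n.lt_succ_self.trans_eq hn.symm)⟩
  choose par hpar using exists_parent
  refine ⟨fun i => if hi : i = q then q else par i hi, dep, ⟨dif_pos rfl, ?_, ?_⟩⟩ <;>
    intro i hi <;> simp only [hi, dite_false, hpar]

theorem IsSpanningTree.induction {r : V → V → Prop} {q : V} {par : V → V} {dep : V → ℕ}
    (h : IsSpanningTree r q par dep) {P : V → Prop} (root : P q)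
    (step : ∀ i, i ≠ q → P (par i) → P i) (i : V) : P i := by
  induction hd : dep i using Nat.strong_induction_on generalizing i with
  | _ d ih =>
    by_cases hi : i = q
    · exact hi ▸ root
    · exact step i hi (ih _ (hd ▸ h.depth_parent_lt i hi) _ rfl)

end SpanningTree

section GraphLaplacian

variable {V : Type*} [Fintype V] (adj : V → V → Prop) [DecidableRel adj]

/-- The in-degree Laplacian of a directed graph, `(Lz)ᵢ = Σ (zᵢ - zⱼ)` over the arcs `j → i`, acting
on vectors with entries in an arbitrary group: the coupling of the error system under gains
`H_{ij} = hᵢ Iₙ`. -/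
def graphLap {E : Type*} [AddCommGroup E] (z : V → E) (i : V) : E :=
  ∑ j, if adj j i then z i - z j else 0

variable {adj}

theorem map_graphLap {E G F : Type*} [AddCommGroup E] [AddCommGroup G] [FunLike F E G]
    [AddMonoidHomClass F E G] (φ : F) (z : V → E) (i : V) :
    φ (graphLap adj z i) = graphLap adj (φ ∘ z) i := by
  simp only [graphLap, map_sum, apply_ite φ, map_sub, map_zero, Function.comp_apply]

theorem graphLap_smul {R E : Type*} [AddCommGroup E] [Monoid R] [DistribMulAction R E] (c : R)
    (z : V → E) (i : V) : graphLap adj (c • z) i = c • graphLap adj z i :=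
  (map_graphLap (DistribSMul.toAddMonoidHom E c) z i).symm

theorem continuous_graphLap {E : Type*} [AddCommGroup E] [TopologicalSpace E]
    [IsTopologicalAddGroup E] (i : V) : Continuous fun z : V → E => graphLap adj z i := by
  refine continuous_finsetSum _ fun j _ => ?_
  split_ifs <;> fun_prop

theorem graphLap_sub_const {E : Type*} [AddCommGroup E] (z : V → E) (x : E) (i : V) :
    graphLap adj (fun j => z j - x) i = graphLap adj z i := by
  simp only [graphLap, sub_sub_sub_cancel_right]

theorem graphLap_eq_zero_of_forall_adj {E : Type*} [AddCommGroup E] {z : V → E} {i : V}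
    (h : ∀ j, adj j i → z j = z i) : graphLap adj z i = 0 :=
  Finset.sum_eq_zero fun j _ => ite_eq_right_iff.2 fun hj => sub_eq_zero.2 (h j hj).symm

variable {y : V → ℝ} {i a q : V}

theorem eq_of_adj_of_graphLap_nonneg (hmin : ∀ j, y i ≤ y j) (hi : 0 ≤ graphLap adj y i)
    {j : V} (hj : adj j i) : y j = y i := by
  have hterm : ∀ k ∈ univ, (if adj k i then y i - y k else 0) ≤ 0 := fun k _ => by
    split_ifs
    exacts [sub_nonpos.2 (hmin k), le_rfl]
  have hzero := (Finset.sum_eq_zero_iff_of_nonpos hterm).1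
    (le_antisymm (Finset.sum_nonpos hterm) hi) j (mem_univ j)
  rw [if_pos hj, sub_eq_zero] at hzero
  exact hzero.symm

theorem eq_of_reflTransGen_of_graphLap_nonneg
    (hsup : ∀ i, (∀ j, y i ≤ y j) → 0 ≤ graphLap adj y i) (hmin : ∀ j, y i ≤ y j)
    (hai : Relation.ReflTransGen adj a i) : y a = y i := by
  induction hai using Relation.ReflTransGen.head_induction_on with
  | refl => rfl
  | head hab _ ih =>
    rw [← ih]
    exact eq_of_adj_of_graphLap_nonneg (ih ▸ hmin) (hsup _ (ih ▸ hmin)) hab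

theorem nonneg_of_graphLap_nonneg {S : Set V} (hS : ∀ i ∈ S, 0 ≤ graphLap adj y i)
    (hSc : ∀ i ∉ S, 0 ≤ y i) (hq : q ∉ S) (hreach : ∀ i, Relation.ReflTransGen adj q i) (i : V) :
    0 ≤ y i := by
  have : Nonempty V := ⟨q⟩
  obtain ⟨a, ha⟩ := Finite.exists_min y
  refine le_trans ?_ (ha i)
  by_contra! hneg
  refine (hSc q hq).not_gt (lt_of_eq_of_lt ?_ hneg)
  refine eq_of_reflTransGen_of_graphLap_nonneg (fun j hj => hS j ?_) ha (hreach a)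
  by_contra hjS
  exact (hSc j hjS).not_gt ((hj a).trans_lt hneg)

theorem eq_of_forall_graphLap_nonneg (hconn : ∀ i j, Relation.ReflTransGen adj i j)
    (hy : ∀ i, 0 ≤ graphLap adj y i) (i j : V) : y i = y j := by
  have : Nonempty V := ⟨i⟩
  obtain ⟨a, ha⟩ := Finite.exists_min y
  have hconst (k : V) : y k = y a :=
    eq_of_reflTransGen_of_graphLap_nonneg (fun k _ => hy k) ha (hconn k a)
  rw [hconst i, hconst j]

theorem forall_eq_zero_of_smul_graphLap_add_eq_zero {E : Type*} [AddCommGroup E] [Module ℝ E]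
    (hconn : ∀ i j, Relation.ReflTransGen adj i j) {d : V → ℝ} (hd : ∀ i, 0 < d i) {z ρ : V → E}
    (h : ∀ i, d i • graphLap adj z i + ρ i = 0) {φ : E →ₗ[ℝ] ℝ} (hφ : ∀ i, 0 ≤ φ (ρ i))
    (hφ0 : ∀ i, φ (ρ i) = 0 → ρ i = 0) : ∀ i, ρ i = 0 := by
  have hrow (i : V) : φ (ρ i) = d i * graphLap adj (⇑(-φ) ∘ z) i := by
    rw [← map_graphLap, eq_neg_of_add_eq_zero_right (h i)]
    simp
  have hconst := eq_of_forall_graphLap_nonneg (y := ⇑(-φ) ∘ z) hconn fun i =>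
    nonneg_of_mul_nonneg_right (hrow i ▸ hφ i) (hd i)
  refine fun i => hφ0 i ?_
  rw [hrow, graphLap_eq_zero_of_forall_adj fun j _ => hconst j i, mul_zero]

theorem eq_zero_of_graphLap_eq_zero_on {nxt : V → V} {dst : V → ℕ}
    (hT : IsSpanningTree (flip adj) q nxt dst) (hreach : ∀ i, Relation.ReflTransGen adj q i)
    {S : Set V} {k : V} (hqS : q ∉ insert k S) (hmax : ∀ i ∈ S, dst i ≤ dst k)
    (hclosed : ∀ i ∈ insert k S, nxt i ∈ insert q (insert k S))
    (hoff : ∀ i ∉ insert k S, y i = 0) (hnbr : ∀ j, adj j q → y j = 0)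
    (hS : ∀ i ∈ S, graphLap adj y i = 0) (hk : 0 ≤ y k) : y k = 0 := by
  have hqS' : q ∉ S := fun h => hqS (Set.mem_insert_of_mem k h)
  have hnonneg (i : V) : 0 ≤ y i := by
    refine nonneg_of_graphLap_nonneg (fun i hi => (hS i hi).ge) (fun i hi => ?_) hqS' hreach i
    by_cases hik : i = k
    · exact hik ▸ hk
    · exact (hoff i (by simp [hik, hi])).ge
  suffices h : ∀ i, i ∈ insert q (insert k S) → y i = 0 from h k (by simp)
  refine hT.induction (fun _ => hoff q hqS) fun i hiq ih hi => ?_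
  have hi : i ∈ insert k S := Set.mem_of_mem_insert_of_ne hi hiq
  have hadj : adj i (nxt i) := hT.rel_parent i hiq
  obtain hq | hk | hmem := hclosed i hi
  · exact hnbr i (hq ▸ hadj)
  · refine absurd (hT.depth_parent_lt i hiq) (hk ▸ not_lt.2 ?_)
    exact hi.elim (fun h => h ▸ le_rfl) (hmax i)
  · have hzero := ih (hclosed i hi)
    rw [eq_of_adj_of_graphLap_nonneg (hzero ▸ hnonneg) (hS _ hmem).ge hadj, hzero]

end GraphLaplacian

section GroundedLaplacian

open Topology Filter

theorem eq_zero_of_tendsto_of_eventually {α V E : Type*} [TopologicalSpace E] [T2Space E] [Zero E]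
    {l : Filter α} [l.NeBot] {u : α → V → E} {x : V → E} {i : V} (hu : Tendsto u l (𝓝 x))
    (h : ∀ᶠ s in l, u s i = 0) : x i = 0 :=
  tendsto_nhds_unique (tendsto_pi_nhds.1 hu i) (tendsto_const_nhds.congr' (EventuallyEq.symm h))

variable {V : Type*} [Fintype V] {adj : V → V → Prop} [DecidableRel adj] {q : V}
  {E : Type*} [NormedAddCommGroup E] [NormedSpace ℂ E]

/-- A mode of the row-weighted Laplacian `d · L`, grounded outside `S`, that the in-neighbours of
`q` do not see. The zero vector is allowed, so that unobservability is a linear condition on `z`. -/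
structure IsHiddenMode (adj : V → V → Prop) [DecidableRel adj] (q : V) (S : Finset V) (d : V → ℝ)
    (μ : ℂ) (z : V → E) : Prop where
  eq_zero_of_notMem : ∀ i ∉ S, z i = 0
  eq_zero_of_adj : ∀ j, adj j q → z j = 0
  smul_graphLap : ∀ i, d i • graphLap adj z i = μ • z i

namespace IsHiddenMode

variable {S : Finset V} {d : V → ℝ} {μ : ℂ} {z : V → E}

theorem smul (h : IsHiddenMode adj q S d μ z) (c : ℝ) : IsHiddenMode adj q S d μ (c • z) where
  eq_zero_of_notMem i hi := by rw [Pi.smul_apply, h.eq_zero_of_notMem i hi, smul_zero]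
  eq_zero_of_adj j hj := by rw [Pi.smul_apply, h.eq_zero_of_adj j hj, smul_zero]
  smul_graphLap i := by rw [graphLap_smul, smul_comm, h.smul_graphLap, Pi.smul_apply, smul_comm]

theorem exists_of_tendsto {α : Type*} {l : Filter α} [l.NeBot] {δ : α → V → ℝ} {c : α → ℂ}
    {u : α → V → E} (hδ : Tendsto δ l (𝓝 d)) (hu : Tendsto u l (𝓝 z)) (hz : z ≠ 0)
    (h : ∀ᶠ s in l, IsHiddenMode adj q S (δ s) (c s) (u s)) : ∃ μ, IsHiddenMode adj q S d μ z := by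
  have hlim : Tendsto (fun s => c s • u s) l (𝓝 fun i => d i • graphLap adj z i) := by
    refine Tendsto.congr' (h.mono fun s hs => funext hs.smul_graphLap) ?_
    exact tendsto_pi_nhds.2 fun i =>
      (tendsto_pi_nhds.1 hδ i).smul (((continuous_graphLap i).tendsto z).comp hu)
  obtain ⟨μ, hμ⟩ := exists_eq_smul_of_tendsto_smul hz hu hlim
  exact ⟨μ, fun i hi => eq_zero_of_tendsto_of_eventually hu (h.mono fun _ hs => hs.1 i hi),
    fun j hj => eq_zero_of_tendsto_of_eventually hu (h.mono fun _ hs => hs.2 j hj), congrFun hμ⟩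

theorem eq_zero_of_insert [DecidableEq V] {nxt : V → V} {dst : V → ℕ} {k : V}
    (hT : IsSpanningTree (flip adj) q nxt dst) (hreach : ∀ i, Relation.ReflTransGen adj q i)
    (hq : q ∉ insert k S) (hmax : ∀ i ∈ S, dst i ≤ dst k)
    (hclosed : ∀ i ∈ insert k S, nxt i ∈ insert q (insert k S)) (hd : ∀ i ∈ S, 0 < d i)
    (hdk : d k = 0) (hS : ∀ (μ : ℂ) (z : V → E), IsHiddenMode adj q S d μ z → z = 0)
    (h : IsHiddenMode adj q (insert k S) d μ z) : z = 0 := by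
  have hzk : z k = 0 := by
    by_contra hzk
    have hμ : μ = 0 := by simpa [hdk, hzk, eq_comm] using h.smul_graphLap k
    have hharm (i : V) (hi : i ∈ S) : graphLap adj z i = 0 := by
      simpa [hμ, (hd i hi).ne'] using h.smul_graphLap i
    obtain ⟨φ, hφ⟩ := SeparatingDual.exists_eq_one (R := ℝ) hzk
    have hφk := eq_zero_of_graphLap_eq_zero_on (y := φ ∘ z) (S := S) hT hreach (by simpa using hq)
      hmax (by simpa using hclosed)
      (fun i hi => by simp [h.eq_zero_of_notMem i (by simpa using hi)])
      (fun j hj => by simp [h.eq_zero_of_adj j hj])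
      (fun i hi => by rw [← map_graphLap, hharm i hi, map_zero]) (by simp [hφ])
    exact one_ne_zero (hφ.symm.trans hφk)
  refine hS μ z ⟨fun i hi => ?_, h.eq_zero_of_adj, h.smul_graphLap⟩
  by_cases hik : i = k
  · exact hik ▸ hzk
  · exact h.eq_zero_of_notMem i (by simp [hik, hi])

end IsHiddenMode

variable [FiniteDimensional ℂ E]

/-- Vertices are added in order of their distance `dst` to `q`, each with a weight small enough for
the modes to stay close to those with weight `0` there. -/
theorem exists_weights_forall_hidden_mode_eq_zero [DecidableEq V] {nxt : V → V} {dst : V → ℕ}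
    (hT : IsSpanningTree (flip adj) q nxt dst) (hreach : ∀ i, Relation.ReflTransGen adj q i)
    (S : Finset V) (hqS : q ∉ S) (hclosed : ∀ i ∈ S, nxt i ∈ insert q S) :
    ∃ d : V → ℝ, (∀ i ∈ S, 0 < d i) ∧ (∀ i ∉ S, d i = 0) ∧
      ∀ (μ : ℂ) (z : V → E), IsHiddenMode adj q S d μ z → z = 0 := by
  induction S using Finset.induction_on_max_value dst with
  | empty =>
    exact ⟨0, by simp, fun _ _ => rfl, fun μ z hz => funext fun i => hz.1 i (notMem_empty i)⟩
  | insert k S hkS hmax ih =>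
    have hqS' : q ∉ S := fun h => hqS (mem_insert_of_mem h)
    obtain ⟨d, hdpos, hdzero, hd⟩ := ih hqS' fun i hi => by
      have hlt := (hT.depth_parent_lt i fun h => hqS' (h ▸ hi)).trans_le (hmax i hi)
      have hne : nxt i ≠ k := fun h => hlt.ne (congrArg dst h)
      simpa [hne] using hclosed i (mem_insert_of_mem hi)
    have hsmall : ∀ᶠ t in 𝓝[>] (0 : ℝ), ∀ (μ : ℂ) (z : V → E),
        IsHiddenMode adj q (insert k S) (Function.update d k t) μ z → z = 0 := by
      refine eventually_forall_eq_zero_of_ultrafilter (fun _ _ _ c h => h.smul c) ?_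
      intro 𝓤 h𝓤 μ u z hu huz
      by_contra hz
      have hδ : Tendsto (Function.update d k) 𝓤 (𝓝 d) := by
        have hcont : Continuous (Function.update d k) := continuous_const.update k continuous_id
        have h := hcont.tendsto 0
        rw [← hdzero k hkS, Function.update_eq_self] at h
        exact h.mono_left (hdzero k hkS ▸ h𝓤.trans nhdsWithin_le_nhds)
      obtain ⟨c, hc⟩ := IsHiddenMode.exists_of_tendsto hδ huz hz hu
      exact hz (hc.eq_zero_of_insert hT hreach hqS hmax hclosed hdpos (hdzero k hkS) hd)
    obtain ⟨t, ht, htpos⟩ := (hsmall.and self_mem_nhdsWithin).exists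
    refine ⟨Function.update d k t, fun i hi => ?_, fun i hi => ?_, ht⟩
    · obtain rfl | hik := eq_or_ne i k
      · simpa using htpos
      · rw [Function.update_of_ne hik]
        exact hdpos i (mem_of_mem_insert_of_ne hi hik)
    · rw [mem_insert, not_or] at hi
      rw [Function.update_of_ne hi.1, hdzero i hi.2]

theorem exists_pos_weights_forall_grounded_mode_eq_zero (adj : V → V → Prop)
    [DecidableRel adj] (E : Type*) [NormedAddCommGroup E] [NormedSpace ℂ E] [FiniteDimensional ℂ E]
    (hconn : ∀ i j, Relation.ReflTransGen adj i j) (q : V) :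
    ∃ d : V → ℝ, (∀ i, 0 < d i) ∧ ∀ (μ : ℂ) (z : V → E), z q = 0 → (∀ j, adj j q → z j = 0) →
      (∀ i, d i • graphLap adj z i = μ • z i) → z = 0 := by
  classical
  obtain ⟨nxt, dst, hT⟩ := exists_isSpanningTree (r := flip adj) (q := q) fun i =>
    Relation.reflTransGen_swap.2 (hconn i q)
  obtain ⟨d, hdpos, hdq, hd⟩ := exists_weights_forall_hidden_mode_eq_zero (E := E) hT (hconn q)
    (univ.erase q) (notMem_erase q univ) (by simp)
  refine ⟨Function.update d q 1, fun i => ?_, fun μ z hzq hnbr hrow => ?_⟩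
  · obtain rfl | hiq := eq_or_ne i q
    · simp
    · simpa [hiq] using hdpos i (by simp [hiq])
  · refine hd μ z ⟨fun i hi => ?_, hnbr, fun i => ?_⟩
    · obtain rfl : i = q := by simpa using hi
      exact hzq
    · obtain rfl | hiq := eq_or_ne i q
      · rw [hzq, hdq i (by simp), zero_smul, smul_zero]
      · simpa [hiq] using hrow i

end GroundedLaplacian

section FastNetwork

open Topology Filter

variable {V : Type*} [Fintype V] {adj : V → V → Prop} [DecidableRel adj] {q : V}
  {E : Type*} [NormedAddCommGroup E] [NormedSpace ℂ E]
  {a : Module.End ℂ E} {r b : V → Module.End ℂ E} {d : V → ℝ}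

/-- With the gains `dᵢ / s` on the network, a mode `e` of the error system that channel `q` does not
see, in the coordinates `e_q = x.1`, `eᵢ = x.1 + s • x.2 i`, in which the limit `s → 0` is regular.
-/
structure IsHiddenErrorMode (adj : V → V → Prop) [DecidableRel adj] (q : V) (a : Module.End ℂ E)
    (r b : V → Module.End ℂ E) (d : V → ℝ) (s : ℝ) (μ : ℂ) (x : E × (V → E)) : Prop where
  snd_apply_eq_zero : x.2 q = 0
  snd_eq_zero_of_adj : ∀ j, adj j q → x.2 j = 0
  row_fst : a x.1 - s • ∑ j, b j (x.2 j) = μ • x.1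
  row_snd : ∀ i, d i • graphLap adj x.2 i + r i x.1 + s • (a + r i + ∑ j, b j) (x.2 i) =
    (s * μ) • x.2 i

namespace IsHiddenErrorMode

theorem smul {s : ℝ} {μ : ℂ} {x : E × (V → E)} (h : IsHiddenErrorMode adj q a r b d s μ x)
    (t : ℝ) : IsHiddenErrorMode adj q a r b d s μ (t • x) where
  snd_apply_eq_zero := by simp [h.snd_apply_eq_zero]
  snd_eq_zero_of_adj j hj := by simp [h.snd_eq_zero_of_adj j hj]
  row_fst := by
    simp only [Prod.smul_fst, Prod.smul_snd, Pi.smul_apply, LinearMap.map_smul_of_tower,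
      ← Finset.smul_sum]
    rw [smul_comm s t, ← smul_sub, h.row_fst, smul_comm]
  row_snd i := by
    simp only [Prod.smul_fst, Prod.smul_snd, Pi.smul_apply, LinearMap.map_smul_of_tower,
      graphLap_smul]
    rw [smul_comm (d i) t, smul_comm s t, ← smul_add, ← smul_add, h.row_snd, smul_comm]

theorem of_sub_eq_smul {s : ℝ} {μ : ℂ} {e z : V → E} (hs : s ≠ 0)
    (hz : ∀ i, e i - e q = s • z i)
    (he : ∀ i, a (e i) + r i (e i) + (d i / s) • graphLap adj e i + ∑ j, b j (e i - e j) = μ • e i)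
    (hrq : r q (e q) = 0) (hnbr : ∀ j, adj j q → e j = e q) :
    IsHiddenErrorMode adj q a r b d s μ (e q, z) := by
  have hrow_q : a (e q) + ∑ j, b j (e q - e j) = μ • e q := by
    simpa [hrq, graphLap_eq_zero_of_forall_adj hnbr] using he q
  have hlap (i : V) : graphLap adj e i = s • graphLap adj z i := by
    rw [← graphLap_smul, ← graphLap_sub_const e (e q), funext hz]
    rfl
  have hz0 (j : V) (hj : e j = e q) : z j = 0 :=
    (smul_eq_zero_iff_right hs).1 ((hz j).symm.trans (sub_eq_zero.2 hj))
  refine ⟨hz0 q rfl, fun j hj => hz0 j (hnbr j hj), ?_, fun i => ?_⟩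
  · rw [← hrow_q, Finset.smul_sum, sub_eq_add_neg, ← Finset.sum_neg_distrib]
    refine congrArg _ (Finset.sum_congr rfl fun j _ => ?_)
    rw [← LinearMap.map_smul_of_tower, ← hz, ← map_neg, neg_sub]
  · have hb : ∑ j, b j (e i - e j) - ∑ j, b j (e q - e j) = ∑ j, b j (e i - e q) := by
      simp only [← Finset.sum_sub_distrib, ← map_sub, sub_sub_sub_cancel_right]
    calc d i • graphLap adj z i + r i (e q) + s • (a + r i + ∑ j, b j) (z i)
      _ = (d i / s) • graphLap adj e i + r i (e q) + (a + r i + ∑ j, b j) (e i - e q) := by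
        rw [hlap, smul_smul, div_mul_cancel₀ _ hs, hz, LinearMap.map_smul_of_tower]
      _ = μ • e i - μ • e q := by
        rw [← he i, ← hrow_q]
        simp only [LinearMap.add_apply, LinearMap.sum_apply, ← hb, map_sub (r i), map_sub a]
        abel
      _ = (s * μ) • z i := by
        rw [← smul_sub, hz, smul_comm, mul_smul, Complex.coe_smul]

variable [FiniteDimensional ℂ E]

theorem tendsto_smul_fst {l : Filter ℝ} (hl : l ≤ 𝓝 0) {μ : ℝ → ℂ} {u : ℝ → E × (V → E)}
    {x : E × (V → E)} (hux : Tendsto u l (𝓝 x))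
    (hu : ∀ᶠ s in l, IsHiddenErrorMode adj q a r b d s (μ s) (u s)) :
    Tendsto (fun s => μ s • (u s).1) l (𝓝 (a x.1)) := by
  have (f : Module.End ℂ E) : Continuous f := f.continuous_of_finiteDimensional
  refine Tendsto.congr' (hu.mono fun s h => h.row_fst) ?_
  have hlim : Continuous fun p : ℝ × E × (V → E) => a p.2.1 - p.1 • ∑ j, b j (p.2.2 j) := by
    fun_prop
  simpa [Function.comp_def] using (hlim.tendsto (0, x)).comp (Tendsto.prodMk_nhds hl hux)

theorem tendsto_smul_snd {l : Filter ℝ} (hl : l ≤ 𝓝 0) {μ : ℝ → ℂ} {u : ℝ → E × (V → E)}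
    {x : E × (V → E)} (hux : Tendsto u l (𝓝 x))
    (hu : ∀ᶠ s in l, IsHiddenErrorMode adj q a r b d s (μ s) (u s)) :
    Tendsto (fun s => (s * μ s) • (u s).2) l
      (𝓝 fun i => d i • graphLap adj x.2 i + r i x.1) := by
  have (f : Module.End ℂ E) : Continuous f := f.continuous_of_finiteDimensional
  refine Tendsto.congr' (hu.mono fun s h => funext h.row_snd) (tendsto_pi_nhds.2 fun i => ?_)
  have hlim : Continuous fun p : ℝ × E × (V → E) =>
      d i • graphLap adj p.2.2 i + r i p.2.1 + p.1 • (a + r i + ∑ j, b j) (p.2.2 i) := by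
    have := continuous_graphLap (adj := adj) (E := E) i
    fun_prop
  simpa [Function.comp_def] using (hlim.tendsto (0, x)).comp (Tendsto.prodMk_nhds hl hux)

theorem eq_zero_of_tendsto {l : Filter ℝ} [l.NeBot] (hl : l ≤ 𝓝 0)
    (hconn : ∀ i j, Relation.ReflTransGen adj i j)
    (hr : ∀ v, ∃ φ : E →ₗ[ℝ] ℝ, ∀ i, 0 ≤ φ (r i v) ∧ (φ (r i v) = 0 → r i v = 0))
    (hjoint : ∀ (μ : ℂ) (v : E), a v = μ • v → (∀ i, r i v = 0) → v = 0)
    (hd : ∀ i, 0 < d i) (hgrounded : ∀ (μ : ℂ) (z : V → E), z q = 0 → (∀ j, adj j q → z j = 0) →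
      (∀ i, d i • graphLap adj z i = μ • z i) → z = 0)
    {μ : ℝ → ℂ} {u : ℝ → E × (V → E)} {x : E × (V → E)} (hux : Tendsto u l (𝓝 x))
    (hu : ∀ᶠ s in l, IsHiddenErrorMode adj q a r b d s (μ s) (u s)) : x = 0 := by
  have hv : Tendsto (fun s => (u s).1) l (𝓝 x.1) := (continuous_fst.tendsto x).comp hux
  have hz : Tendsto (fun s => (u s).2) l (𝓝 x.2) := (continuous_snd.tendsto x).comp hux
  have hfst := tendsto_smul_fst hl hux hu
  have hsnd := tendsto_smul_snd hl hux hu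
  have hq : x.2 q = 0 := eq_zero_of_tendsto_of_eventually hz (hu.mono fun _ h => h.1)
  have hnbr (j : V) (hj : adj j q) : x.2 j = 0 :=
    eq_zero_of_tendsto_of_eventually hz (hu.mono fun _ h => h.2 j hj)
  by_contra hx
  obtain ⟨c, hc⟩ : ∃ c : ℂ, ((0 : E), fun i => d i • graphLap adj x.2 i + r i x.1) = c • x := by
    refine exists_eq_smul_of_tendsto_smul (c := fun s => s * μ s) hx hux ?_
    refine Tendsto.prodMk_nhds ?_ hsnd
    simpa [mul_smul] using Tendsto.smul (hl : Tendsto (fun s : ℝ => s) l (𝓝 0)) hfst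
  have hrow (i : V) : d i • graphLap adj x.2 i + r i x.1 = c • x.2 i :=
    congrFun (congrArg Prod.snd hc) i
  by_cases hx₁ : x.1 = 0
  · exact hx (Prod.ext hx₁ (hgrounded c _ hq hnbr fun i => by simpa [hx₁] using hrow i))
  · have hc0 : c = 0 := by simpa [hx₁, eq_comm] using congrArg Prod.fst hc
    obtain ⟨φ, hφ⟩ := hr x.1
    have hrv : ∀ i, r i x.1 = 0 := forall_eq_zero_of_smul_graphLap_add_eq_zero hconn hd
      (fun i => by rw [hrow, hc0, zero_smul]) (fun i => (hφ i).1) fun i => (hφ i).2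
    obtain ⟨ν, hν⟩ := exists_eq_smul_of_tendsto_smul hx₁ hv hfst
    exact hx₁ (hjoint ν _ hν hrv)

end IsHiddenErrorMode

/-- The high-gain error system is a singular perturbation of the network: as `s → 0` a hidden mode
tends either to a mode of the grounded Laplacian, or to a steady state of the network driven by the
outputs `r i v` of a common eigenvector `v` of the plant, which positivity forces to vanish. -/
theorem exists_gains_forall_hidden_mode_eq_zero [FiniteDimensional ℂ E]
    (hconn : ∀ i j, Relation.ReflTransGen adj i j)
    (hr : ∀ v, ∃ φ : E →ₗ[ℝ] ℝ, ∀ i, 0 ≤ φ (r i v) ∧ (φ (r i v) = 0 → r i v = 0))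
    (hjoint : ∀ (μ : ℂ) (v : E), a v = μ • v → (∀ i, r i v = 0) → v = 0) (b : V → Module.End ℂ E)
    (q : V) :
    ∃ h : V → ℝ, ∀ (μ : ℂ) (e : V → E),
      (∀ i, a (e i) + r i (e i) + h i • graphLap adj e i + ∑ j, b j (e i - e j) = μ • e i) →
      r q (e q) = 0 → (∀ j, adj j q → e j = e q) → e = 0 := by
  obtain ⟨d, hd, hgrounded⟩ := exists_pos_weights_forall_grounded_mode_eq_zero adj E hconn q
  have hsmall : ∀ᶠ s in 𝓝[≠] (0 : ℝ), ∀ (μ : ℂ) (x : E × (V → E)),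
      IsHiddenErrorMode adj q a r b d s μ x → x = 0 :=
    eventually_forall_eq_zero_of_ultrafilter (fun _ _ _ t h => h.smul t)
      fun 𝓤 h𝓤 μ u x hu hux => IsHiddenErrorMode.eq_zero_of_tendsto
        (h𝓤.trans nhdsWithin_le_nhds) hconn hr hjoint hd hgrounded hux hu
  obtain ⟨s, hsmode, hs : s ≠ 0⟩ := (hsmall.and self_mem_nhdsWithin).exists
  refine ⟨fun i => d i / s, fun μ e he hrq hnbr => ?_⟩
  let z : V → E := fun i => s⁻¹ • (e i - e q)
  have hz (i : V) : e i - e q = s • z i := (smul_inv_smul₀ hs _).symm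
  have hzero := hsmode μ _ (IsHiddenErrorMode.of_sub_eq_smul hs hz he hrq hnbr)
  funext i
  have hq : e q = 0 := congrArg Prod.fst hzero
  simpa [hq, show z = 0 from congrArg Prod.snd hzero] using hz i

end FastNetwork

section TreeControllability

open scoped Kronecker

variable {V : Type*}

namespace IsSpanningTree

variable {r : V → V → Prop} {q : V} {par : V → V} {dep : V → ℕ}

theorem depth_iterate_le (h : IsSpanningTree r q par dep) (i : V) (t : ℕ) :
    dep (par^[t] i) ≤ dep i := by
  induction t with
  | zero => rfl
  | succ t ih =>
    rw [Function.iterate_succ_apply']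
    by_cases hq : par^[t] i = q
    · rwa [hq, h.parent_root, ← hq]
    · exact (h.depth_parent_lt _ hq).le.trans ih

theorem eq_of_parent_eq_of_iterate (h : IsSpanningTree r q par dep) {k i j : V} {s t : ℕ}
    (hi : par^[s] k = i) (hj : par^[t] k = j) (hiq : i ≠ q) (hjq : j ≠ q) (hij : par i = par j) :
    i = j := by
  wlog hst : s ≤ t generalizing s t i j
  · exact (this hj hi hjq hiq hij.symm (Nat.le_of_not_le hst)).symm
  obtain ⟨u, rfl⟩ := Nat.exists_eq_add_of_le' hst
  rw [Function.iterate_add_apply, hi] at hj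
  cases u with
  | zero => exact hj
  | succ u =>
    have hle := h.depth_iterate_le (par i) u
    rw [← Function.iterate_succ_apply, hj] at hle
    exact absurd (h.depth_parent_lt j hjq) (hij ▸ hle.not_gt)

variable [Fintype V] [DecidableEq V]

theorem exists_iterate_parent_eq (h : IsSpanningTree r q par dep) {K : Type*} [Field K]
    {d w : V → K} {μ : K} (hdq : d q = 0)
    (hw : ∀ j, (d j - μ) * w j = ∑ i with par i = j, d i * w i) {j : V} (hj : w j ≠ 0) :
    ∃ k t, d k = μ ∧ par^[t] k = j := by
  by_contra! hne
  have hsup (l : V) (hl : w l ≠ 0) (hlj : ∃ t, par^[t] l = j) :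
      ∃ c, w c ≠ 0 ∧ (∃ t, par^[t] c = j) ∧ dep l < dep c := by
    obtain ⟨t, ht⟩ := hlj
    have hsum : ∑ i with par i = l, d i * w i ≠ 0 :=
      hw l ▸ mul_ne_zero (sub_ne_zero.2 fun hl => hne l t hl ht) hl
    obtain ⟨c, hc, hcw⟩ := Finset.exists_ne_zero_of_sum_ne_zero hsum
    have hcl : par c = l := (mem_filter.1 hc).2
    have hcq : c ≠ q := by
      rintro rfl
      exact hcw (by rw [hdq, zero_mul])
    exact ⟨c, right_ne_zero_of_mul hcw, ⟨t + 1, by rw [Function.iterate_succ_apply, hcl, ht]⟩,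
      hcl ▸ h.depth_parent_lt c hcq⟩
  obtain ⟨l, hl, hmax⟩ := Set.exists_max_image {l | w l ≠ 0 ∧ ∃ t, par^[t] l = j} dep
    (Set.toFinite _) ⟨j, hj, 0, rfl⟩
  obtain ⟨c, hcw, hcj, hlc⟩ := hsup l hl.1 hl.2
  exact hlc.not_ge (hmax c ⟨hcw, hcj⟩)

/-- The support of a left eigenvector lies on the path from a single vertex to the root, so there is
nothing to cancel the entry closest to the root. -/
theorem eq_zero_of_left_eigenvector (h : IsSpanningTree r q par dep) {K : Type*} [Field K]
    {d w : V → K} {μ : K} (hd : Function.Injective d) (hdq : d q = 0)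
    (hw : ∀ j, (d j - μ) * w j = ∑ i with par i = j, d i * w i) (hwq : w q = 0) : w = 0 := by
  by_contra hw0
  obtain ⟨l, hl, hmin⟩ := Set.exists_min_image {l | w l ≠ 0} dep (Set.toFinite _)
    (Function.ne_iff.1 hw0)
  have hne_root {i : V} (hi : w i ≠ 0) : i ≠ q := fun hiq => hi (hiq ▸ hwq)
  have hpar : w (par l) = 0 := by
    by_contra hpl
    exact (h.depth_parent_lt l (hne_root hl)).not_ge (hmin _ hpl)
  have hterm : ∀ i ∈ univ.filter (par · = par l), i ≠ l → d i * w i = 0 := fun i hi hil => by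
    refine mul_eq_zero_of_right _ (not_not.1 fun hwi => hil ?_)
    obtain ⟨k, s, hk, hki⟩ := h.exists_iterate_parent_eq hdq hw hwi
    obtain ⟨k', t, hk', hkl⟩ := h.exists_iterate_parent_eq hdq hw hl
    rw [hd (hk'.trans hk.symm)] at hkl
    exact h.eq_of_parent_eq_of_iterate hki hkl (hne_root hwi) (hne_root hl) (mem_filter.1 hi).2
  have hrow := hw (par l)
  rw [hpar, mul_zero, Finset.sum_eq_single l hterm (by simp)] at hrow
  refine mul_ne_zero (fun hdl => hne_root hl (hd (hdl.trans hdq.symm))) hl hrow.symm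

end IsSpanningTree

variable [Fintype V] [DecidableEq V]

/-- The row-weighted Laplacian of the tree with arcs `par i → i`, as a matrix: the coupling that
makes the network controllable from the root. -/
def treeLap (par : V → V) (d : V → ℝ) : Matrix V V ℝ :=
  Matrix.of fun i j => d i * ((if i = j then 1 else 0) - if par i = j then 1 else 0)

theorem vecMul_map_ofReal_treeLap (par : V → V) (d : V → ℝ) (w : V → ℂ) (j : V) :
    (w ᵥ* (treeLap par d).map Complex.ofReal) j =
      d j * w j - ∑ i with par i = j, d i * w i := by
  simp only [vecMul, dotProduct, treeLap, map_apply, of_apply, Finset.sum_filter]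
  simp [mul_sub, Finset.sum_sub_distrib, apply_ite Complex.ofReal, mul_comm]

theorem IsSpanningTree.controllable_treeLap {r : V → V → Prop} {q : V} {par : V → V} {dep : V → ℕ}
    (h : IsSpanningTree r q par dep) {d : V → ℝ} (hd : Function.Injective d) (hdq : d q = 0) :
    Controllable (treeLap par d) (replicateCol Unit (Pi.single q 1)) := by
  suffices Observable (replicateCol Unit (Pi.single q (1 : ℝ)))ᵀ (treeLap par d)ᵀ by
    simpa only [Observable, transpose_transpose] using this
  refine observable_iff_hautus.2 fun μ w hw hwq => ?_
  refine h.eq_zero_of_left_eigenvector (d := fun i => (d i : ℂ)) (μ := μ)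
    (Complex.ofReal_injective.comp hd) (by simp [hdq]) (fun j => ?_) ?_
  · rw [transpose_map, mulVec_transpose] at hw
    have hwj := congrFun hw j
    rw [vecMul_map_ofReal_treeLap, Pi.smul_apply, smul_eq_mul] at hwj
    rw [sub_mul, ← hwj, sub_sub_cancel]
  · have := congrFun hwq ()
    simpa [mulVec, dotProduct, Pi.single_apply, apply_ite Complex.ofReal] using this

end TreeControllability

section KroneckerProduct

open scoped Kronecker

variable {ι κ κ' ν : Type*} [Fintype ι] [DecidableEq ι] [Fintype κ] [Fintype κ'] [Fintype ν]
  [DecidableEq ν] {A : Matrix ι ι ℝ} {B : Matrix ι κ ℝ} {k : ℕ}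

theorem rank_ctrbMat_submatrix_equiv (e : κ' ≃ κ) (h : (ctrbMat A B k).rank = Fintype.card ι) :
    (ctrbMat A (B.submatrix id e) k).rank = Fintype.card ι := by
  rw [rank_ctrbMat_eq_card_iff] at h ⊢
  refine fun y hy => h y fun j hj => funext fun l => ?_
  simpa [vecMul, dotProduct, mul_apply] using congrFun (hy j hj) (e.symm l)

theorem rank_ctrbMat_kronecker_one (h : (ctrbMat A B k).rank = Fintype.card ι) :
    (ctrbMat (A ⊗ₖ (1 : Matrix ν ν ℝ)) (B ⊗ₖ (1 : Matrix ν ν ℝ)) k).rank =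
      Fintype.card (ι × ν) := by
  rw [rank_ctrbMat_eq_card_iff] at h ⊢
  intro y hy
  have hpow (j : ℕ) : (A ⊗ₖ (1 : Matrix ν ν ℝ)) ^ j = (A ^ j) ⊗ₖ 1 := by
    induction j with
    | zero => rw [pow_zero, pow_zero, one_kronecker_one]
    | succ j ih => rw [pow_succ, ih, ← mul_kronecker_mul, ← pow_succ, Matrix.mul_one]
  have hcol (l : ν) : (fun i => y (i, l)) = 0 := h _ fun j hj => funext fun c => by
    have hc := congrFun (hy j hj) (c, l)
    rw [hpow, ← mul_kronecker_mul, Matrix.mul_one] at hc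
    simpa [vecMul, dotProduct, Fintype.sum_prod_type, one_apply] using hc
  exact funext fun p => congrFun (hcol p.2) p.1

end KroneckerProduct

section ErrorSystem

open scoped Kronecker

variable {n m : ℕ} {mdim pdim : Fin m → ℕ}

theorem Btil_eq_submatrix_kronecker_one (i : Fin m) : Btil n i =
    (replicateCol Unit (Pi.single i (1 : ℝ)) ⊗ₖ (1 : Matrix (Fin n) (Fin n) ℝ)).submatrix id
      (Equiv.punitProd (Fin n)).symm := by
  ext p l
  simp [Btil, one_apply, Pi.single_apply, ← ite_and, and_comm]

theorem Btil_mulVec (i j : Fin m) (v : Fin n → ℝ) (k : Fin n) :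
    (Btil n i *ᵥ v) (j, k) = if j = i then v k else 0 := by
  simp [Btil, mulVec, dotProduct, ite_and]

theorem Btil_transpose_mulVec (i : Fin m) (e : Fin m × Fin n → ℝ) :
    (Btil n i)ᵀ *ᵥ e = e.curry i := by
  funext k
  simp [Btil, mulVec, dotProduct, ite_and, Fintype.sum_prod_type]

theorem Ctil_mulVec (adj : Fin m → Fin m → Prop) [DecidableRel adj] (i : Fin m)
    (e : Fin m × Fin n → ℝ) :
    Ctil n adj i *ᵥ e = Function.uncurry fun j : {j // adj j i} => e.curry i - e.curry j := by
  funext r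
  simp [Ctil, mulVec, dotProduct, Fintype.sum_prod_type, sub_mul, Finset.sum_sub_distrib,
    Function.uncurry]

theorem Hblk_mulVec (adj : Fin m → Fin m → Prop) [DecidableRel adj]
    (H : Fin m → Fin m → Matrix (Fin n) (Fin n) ℝ) (i : Fin m) (w : {j // adj j i} × Fin n → ℝ) :
    Hblk adj H i *ᵥ w = ∑ j : {j // adj j i}, H i j *ᵥ w.curry j := by
  funext k
  simp [Hblk, mulVec, dotProduct, Fintype.sum_prod_type]

theorem Atil_mulVec (A : Matrix (Fin n) (Fin n) ℝ)
    (B : ∀ i : Fin m, Matrix (Fin n) (Fin (mdim i)) ℝ)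
    (F : ∀ i : Fin m, Matrix (Fin (mdim i)) (Fin n) ℝ) (e : Fin m × Fin n → ℝ) (i : Fin m) :
    (Atil A B F *ᵥ e).curry i =
      A *ᵥ e.curry i + ∑ j, (B j * F j) *ᵥ (e.curry i - e.curry j) := by
  have hblock : (Atil A B F *ᵥ e).curry i =
      (A + ∑ j, B j * F j) *ᵥ e.curry i - ∑ j, (B j * F j) *ᵥ e.curry j := by
    funext k
    simp only [Atil, mulVec, dotProduct, Function.curry, of_apply, Fintype.sum_prod_type, sub_mul,
      Finset.sum_sub_distrib, Pi.sub_apply, Finset.sum_apply]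
    simp
  rw [hblock, add_mulVec, sum_mulVec]
  simp only [mulVec_sub, Finset.sum_sub_distrib, add_sub_assoc]

/-- The contribution `Σᵢ B̃ᵢ(KᵢĈᵢ + HᵢC̃ᵢ)` of the gains `(K, H)` to the error system, as a linear
function of the gains. -/
def gainMap (C : ∀ i : Fin m, Matrix (Fin (pdim i)) (Fin n) ℝ) (adj : Fin m → Fin m → Prop)
    [DecidableRel adj] :
    ((∀ i : Fin m, Matrix (Fin n) (Fin (pdim i)) ℝ) ×
      (Fin m → Fin m → Matrix (Fin n) (Fin n) ℝ)) →ₗ[ℝ]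
        Matrix (Fin m × Fin n) (Fin m × Fin n) ℝ where
  toFun x := ∑ i : Fin m, Btil n i * (x.1 i * (C i * (Btil n i)ᵀ) + Hblk adj x.2 i * Ctil n adj i)
  map_add' x y := by
    have hH (i : Fin m) : Hblk adj (x + y).2 i = Hblk adj x.2 i + Hblk adj y.2 i := rfl
    simp only [hH, Prod.fst_add, Pi.add_apply, Matrix.add_mul, ← Finset.sum_add_distrib,
      ← Matrix.mul_add, add_add_add_comm]
  map_smul' t x := by
    have hH (i : Fin m) : Hblk adj (t • x).2 i = t • Hblk adj x.2 i := rfl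
    simp only [hH, Prod.smul_fst, Pi.smul_apply, Matrix.smul_mul, ← smul_add, Matrix.mul_smul,
      Finset.smul_sum, RingHom.id_apply]

theorem gainMap_mulVec (C : ∀ i : Fin m, Matrix (Fin (pdim i)) (Fin n) ℝ)
    (adj : Fin m → Fin m → Prop) [DecidableRel adj]
    (K : ∀ i : Fin m, Matrix (Fin n) (Fin (pdim i)) ℝ)
    (H : Fin m → Fin m → Matrix (Fin n) (Fin n) ℝ) (e : Fin m × Fin n → ℝ) (i : Fin m) :
    (gainMap C adj (K, H) *ᵥ e).curry i = (K i * C i) *ᵥ e.curry i +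
      ∑ j, if adj j i then H i j *ᵥ (e.curry i - e.curry j) else 0 := by
  have hH (c : Fin m) : Hblk adj H c *ᵥ (Ctil n adj c *ᵥ e) =
      ∑ j, if adj j c then H c j *ᵥ (e.curry c - e.curry j) else 0 := by
    rw [Ctil_mulVec, Hblk_mulVec, ← Finset.sum_filter]
    exact (Finset.sum_subtype _ (by simp) fun j => H c j *ᵥ (e.curry c - e.curry j)).symm
  funext k
  simp only [Function.curry_apply, gainMap, LinearMap.coe_mk, AddHom.coe_mk, sum_mulVec,
    Finset.sum_apply, ← mulVec_mulVec, Btil_mulVec, add_mulVec, Finset.sum_ite_eq,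
    Finset.mem_univ, if_true, Btil_transpose_mulVec, hH]

theorem Atil_add_gainMap_mulVec (A : Matrix (Fin n) (Fin n) ℝ)
    (B : ∀ i : Fin m, Matrix (Fin n) (Fin (mdim i)) ℝ)
    (C : ∀ i : Fin m, Matrix (Fin (pdim i)) (Fin n) ℝ)
    (F : ∀ i : Fin m, Matrix (Fin (mdim i)) (Fin n) ℝ)
    (adj : Fin m → Fin m → Prop) [DecidableRel adj]
    (K : ∀ i : Fin m, Matrix (Fin n) (Fin (pdim i)) ℝ) (h : Fin m → ℝ)
    (e : Fin m × Fin n → ℝ) (i : Fin m) :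
    ((Atil A B F + gainMap C adj (K, fun i _ => h i • 1)) *ᵥ e).curry i =
      A *ᵥ e.curry i + (K i * C i) *ᵥ e.curry i + h i • graphLap adj e.curry i +
      ∑ j, (B j * F j) *ᵥ (e.curry i - e.curry j) := by
  rw [add_mulVec, show ∀ u v : Fin m × Fin n → ℝ, (u + v).curry i = u.curry i + v.curry i from
    fun _ _ => rfl, Atil_mulVec, gainMap_mulVec]
  simp only [graphLap, Finset.smul_sum, smul_ite, smul_zero, smul_mulVec, one_mulVec]
  abel

theorem fromRows_mulVec_eq_zero_iff {κ : Type*} (C : Matrix κ (Fin n) ℝ)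
    (adj : Fin m → Fin m → Prop) [DecidableRel adj] (q : Fin m) (e : Fin m × Fin n → ℝ) :
    fromRows (C * (Btil n q)ᵀ) (Ctil n adj q) *ᵥ e = 0 ↔
      C *ᵥ e.curry q = 0 ∧ ∀ j, adj j q → e.curry j = e.curry q := by
  rw [fromRows_mulVec, ← mulVec_mulVec, Btil_transpose_mulVec, Ctil_mulVec, ← Sum.elim_zero_zero,
    Sum.elim_eq_iff]
  refine and_congr_right fun _ => ⟨fun h j hj => ?_, fun h => funext fun r => ?_⟩
  · exact (sub_eq_zero.1 <| funext fun k => congrFun h (⟨j, hj⟩, k)).symm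
  · exact congrFun (sub_eq_zero.2 (h r.1 r.1.2).symm) r.2

theorem gainMap_eq_treeLap_kronecker_one (C : ∀ i : Fin m, Matrix (Fin (pdim i)) (Fin n) ℝ)
    {adj : Fin m → Fin m → Prop} [DecidableRel adj] {q : Fin m} {par : Fin m → Fin m}
    {dep : Fin m → ℕ} (hT : IsSpanningTree adj q par dep) {d : Fin m → ℝ} (hdq : d q = 0) :
    gainMap C adj (0, fun i j => if par i = j then d i • 1 else 0) =
      treeLap par d ⊗ₖ (1 : Matrix (Fin n) (Fin n) ℝ) := by
  refine ext_of_mulVec_single fun p => ?_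
  set e : Fin m × Fin n → ℝ := Pi.single p 1
  have hterm (i j : Fin m) : (if adj j i then
      (if par i = j then d i • (1 : Matrix (Fin n) (Fin n) ℝ) else 0) *ᵥ (e.curry i - e.curry j)
      else 0) = if par i = j then d i • (e.curry i - e.curry j) else 0 := by
    obtain rfl | hj := eq_or_ne (par i) j
    · obtain rfl | hi := eq_or_ne i q
      · simp [hdq]
      · simp [hT.rel_parent i hi, smul_mulVec]
    · simp [hj]
  refine funext fun p' => ?_
  change (gainMap C adj _ *ᵥ e).curry p'.1 p'.2 = _
  rw [gainMap_mulVec]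
  simp only [hterm]
  simp [treeLap, mulVec, dotProduct, Fintype.sum_prod_type, mul_sub, sub_mul,
    Finset.sum_sub_distrib, one_apply]

theorem exists_gains_rank_ctrbMat_eq_card (A : Matrix (Fin n) (Fin n) ℝ)
    (B : ∀ i : Fin m, Matrix (Fin n) (Fin (mdim i)) ℝ)
    (C : ∀ i : Fin m, Matrix (Fin (pdim i)) (Fin n) ℝ)
    (F : ∀ i : Fin m, Matrix (Fin (mdim i)) (Fin n) ℝ)
    (adj : Fin m → Fin m → Prop) [DecidableRel adj] (q : Fin m)
    (hreach : ∀ i, Relation.ReflTransGen adj q i) :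
    ∃ x, (ctrbMat (Atil A B F + gainMap C adj x) (Btil n q) m).rank =
      Fintype.card (Fin m × Fin n) := by
  obtain ⟨par, dep, hT⟩ := exists_isSpanningTree hreach
  let d : Fin m → ℝ := fun i => (i : ℝ) - q
  have hd : Function.Injective d := fun i j hij => Fin.ext (by simpa [d] using hij)
  have hdq : d q = 0 := sub_self _
  let x : (∀ i : Fin m, Matrix (Fin n) (Fin (pdim i)) ℝ) ×
    (Fin m → Fin m → Matrix (Fin n) (Fin n) ℝ) := (0, fun i j => if par i = j then d i • 1 else 0)
  have hgain : (ctrbMat (gainMap C adj x) (Btil n q) m).rank = Fintype.card (Fin m × Fin n) := by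
    rw [gainMap_eq_treeLap_kronecker_one C hT hdq, Btil_eq_submatrix_kronecker_one]
    refine rank_ctrbMat_submatrix_equiv _ (rank_ctrbMat_kronecker_one ?_)
    exact rank_ctrbMat_eq_card_of_le (Fintype.card_fin m).le (hT.controllable_treeLap hd hdq)
  have hopen : PolynomiallyOpen fun s : ℝ =>
      (ctrbMat (gainMap C adj x + s • Atil A B F) (Btil n q) m).rank =
        Fintype.card (Fin m × Fin n) :=
    polynomiallyOpen_rank_ctrbMat _ (LinearMap.toSpanSingleton ℝ _ (Atil A B F)) _ _
  obtain ⟨s, hs, hs0⟩ := hopen.exists_and polynomiallyOpen_ne_zero ⟨0, by simpa using hgain⟩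
    ⟨1, one_ne_zero⟩
  refine ⟨s⁻¹ • x, ?_⟩
  simpa [smul_add, hs0, add_comm] using rank_ctrbMat_smul_eq_card (inv_ne_zero hs0) hs

end ErrorSystem

section Observability

open scoped ComplexOrder

variable {n m : ℕ} {mdim pdim : Fin m → ℕ}

theorem exists_forall_conjTranspose_mul_self_nonneg {ι : Type*} [Fintype ι] (v : ι → ℂ) :
    ∃ φ : (ι → ℂ) →ₗ[ℝ] ℝ, ∀ (p : ℕ) (C : Matrix (Fin p) ι ℂ),
      0 ≤ φ ((Cᴴ * C) *ᵥ v) ∧ (φ ((Cᴴ * C) *ᵥ v) = 0 → (Cᴴ * C) *ᵥ v = 0) := by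
  let φ := Complex.reLm ∘ₗ (dotProductBilin ℂ ℂ (star v)).restrictScalars ℝ
  refine ⟨φ, fun p C => ?_⟩
  have hφ : φ ((Cᴴ * C) *ᵥ v) = (star (C *ᵥ v) ⬝ᵥ (C *ᵥ v)).re := by
    rw [star_mulVec, ← dotProduct_mulVec, mulVec_mulVec]
    rfl
  have hnonneg := Complex.le_def.1 (dotProduct_star_self_nonneg (C *ᵥ v))
  rw [hφ]
  refine ⟨hnonneg.1, fun hre => ?_⟩
  rw [conjTranspose_mul_self_mulVec_eq_zero, ← dotProduct_star_self_eq_zero]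
  exact Complex.ext hre hnonneg.2.symm

theorem map_ofReal_Atil_add_gainMap_mulVec (A : Matrix (Fin n) (Fin n) ℝ)
    (B : ∀ i : Fin m, Matrix (Fin n) (Fin (mdim i)) ℝ)
    (C : ∀ i : Fin m, Matrix (Fin (pdim i)) (Fin n) ℝ)
    (F : ∀ i : Fin m, Matrix (Fin (mdim i)) (Fin n) ℝ)
    (adj : Fin m → Fin m → Prop) [DecidableRel adj]
    (K : ∀ i : Fin m, Matrix (Fin n) (Fin (pdim i)) ℝ) (h : Fin m → ℝ)
    (e : Fin m × Fin n → ℂ) (i : Fin m) :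
    ((Atil A B F + gainMap C adj (K, fun i _ => h i • 1)).map Complex.ofReal *ᵥ e).curry i =
      A.map Complex.ofReal *ᵥ e.curry i + (K i * C i).map Complex.ofReal *ᵥ e.curry i +
        h i • graphLap adj e.curry i +
        ∑ j, (B j * F j).map Complex.ofReal *ᵥ (e.curry i - e.curry j) := by
  refine eq_of_forall_linearMap_comp_eq fun ℓ => ?_
  let Φ : (Fin n → ℂ) →ₗ[ℝ] Fin n → ℝ := ℓ.compLeft (Fin n)
  have hΦ (M : Matrix (Fin n) (Fin n) ℝ) (v : Fin n → ℂ) :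
      Φ (M.map Complex.ofReal *ᵥ v) = M *ᵥ Φ v := linearMap_comp_map_ofReal_mulVec ℓ M v
  have hleft := linearMap_comp_map_ofReal_mulVec ℓ
    (Atil A B F + gainMap C adj (K, fun i _ => h i • 1)) e
  have hblock := Atil_add_gainMap_mulVec A B C F adj K h (ℓ ∘ e) i
  rw [← hleft] at hblock
  refine hblock.trans (Eq.symm ?_)
  change Φ _ = _
  simp only [map_add, map_sum, map_smul, map_graphLap, map_sub, hΦ]
  rfl

theorem map_ofReal_fromRows_mulVec_eq_zero {κ : Type*} {C : Matrix κ (Fin n) ℝ}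
    {adj : Fin m → Fin m → Prop} [DecidableRel adj] {q : Fin m} {e : Fin m × Fin n → ℂ}
    (h : (fromRows (C * (Btil n q)ᵀ) (Ctil n adj q)).map Complex.ofReal *ᵥ e = 0) :
    C.map Complex.ofReal *ᵥ e.curry q = 0 ∧ ∀ j, adj j q → e.curry j = e.curry q := by
  have hreal (ℓ : ℂ →ₗ[ℝ] ℝ) : C *ᵥ (ℓ ∘ e).curry q = 0 ∧
      ∀ j, adj j q → (ℓ ∘ e).curry j = (ℓ ∘ e).curry q := by
    rw [← fromRows_mulVec_eq_zero_iff, ← linearMap_comp_map_ofReal_mulVec, h]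
    exact map_zero (ℓ.compLeft _)
  refine ⟨eq_of_forall_linearMap_comp_eq fun ℓ => ?_, fun j hj =>
    eq_of_forall_linearMap_comp_eq fun ℓ => (hreal ℓ).2 j hj⟩
  rw [linearMap_comp_map_ofReal_mulVec]
  exact (hreal ℓ).1.trans (map_zero (ℓ.compLeft κ)).symm

theorem exists_gains_observable (A : Matrix (Fin n) (Fin n) ℝ)
    (B : ∀ i : Fin m, Matrix (Fin n) (Fin (mdim i)) ℝ)
    (C : ∀ i : Fin m, Matrix (Fin (pdim i)) (Fin n) ℝ)
    (F : ∀ i : Fin m, Matrix (Fin (mdim i)) (Fin n) ℝ)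
    (adj : Fin m → Fin m → Prop) [DecidableRel adj]
    (hconn : ∀ i j : Fin m, Relation.ReflTransGen adj i j)
    (hjo : Observable (Matrix.of fun (p : Σ i : Fin m, Fin (pdim i)) k => C p.1 p.2 k) A)
    (q : Fin m) :
    ∃ x, Observable (fromRows (C q * (Btil n q)ᵀ) (Ctil n adj q))
      (Atil A B F + gainMap C adj x) := by
  let c (i : Fin m) : Matrix (Fin (pdim i)) (Fin n) ℂ := (C i).map Complex.ofReal
  have hc (i : Fin m) : ((C i)ᵀ * C i).map Complex.ofReal = (c i)ᴴ * c i := by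
    ext k l
    simp [c, mul_apply]
  have hjoint : ∀ (μ : ℂ) (v : Fin n → ℂ), (A.map Complex.ofReal).mulVecLin v = μ • v →
      (∀ i, ((c i)ᴴ * c i).mulVecLin v = 0) → v = 0 := fun μ v hv hr =>
    observable_iff_hautus.1 hjo μ v hv <| funext fun p =>
      congrFun ((conjTranspose_mul_self_mulVec_eq_zero _ _).1 (hr p.1)) p.2
  obtain ⟨h, hobs⟩ := exists_gains_forall_hidden_mode_eq_zero hconn
    (r := fun i => ((c i)ᴴ * c i).mulVecLin)
    (fun v => (exists_forall_conjTranspose_mul_self_nonneg v).imp fun φ hφ i => hφ _ (c i)) hjoint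
    (fun j => ((B j * F j).map Complex.ofReal).mulVecLin) q
  refine ⟨(fun i => (C i)ᵀ, fun i _ => h i • 1), observable_iff_hautus.2 fun μ e he hy => ?_⟩
  obtain ⟨hCq, hnbr⟩ := map_ofReal_fromRows_mulVec_eq_zero hy
  suffices e.curry = 0 from funext fun p => congrFun₂ this p.1 p.2
  refine hobs μ e.curry (fun i => ?_) ((conjTranspose_mul_self_mulVec_eq_zero _ _).2 hCq) hnbr
  have hrow := congrArg (fun v => Function.curry v i) he
  simp only [map_ofReal_Atil_add_gainMap_mulVec, hc] at hrow
  exact hrow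

end Observability

theorem open_loop_error_system_ctrb_obs_general
    {n m : ℕ} (hn : 0 < n)
    (mdim pdim : Fin m → ℕ)
    (A : Matrix (Fin n) (Fin n) ℝ)
    (B : ∀ i : Fin m, Matrix (Fin n) (Fin (mdim i)) ℝ)
    (C : ∀ i : Fin m, Matrix (Fin (pdim i)) (Fin n) ℝ)
    (adj : Fin m → Fin m → Prop) [DecidableRel adj]
    (hconn : ∀ i j : Fin m, Relation.ReflTransGen adj i j)
    (hjo : Observable
      (Matrix.of fun (p : Σ i : Fin m, Fin (pdim i)) k => C p.1 p.2 k) A)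
    (F : ∀ i : Fin m, Matrix (Fin (mdim i)) (Fin n) ℝ) :
    ∃ (K : ∀ i : Fin m, Matrix (Fin n) (Fin (pdim i)) ℝ)
      (H : Fin m → Fin m → Matrix (Fin n) (Fin n) ℝ),
      ∀ q : Fin m,
        Controllable
          (Atil A B F
            + ∑ i : Fin m,
                Btil n i * (K i * (C i * (Btil n i)ᵀ) + Hblk adj H i * Ctil n adj i))
          (Btil n q)
        ∧ ctrlIndex
            (Atil A B F
              + ∑ i : Fin m,
                  Btil n i * (K i * (C i * (Btil n i)ᵀ) + Hblk adj H i * Ctil n adj i))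
            (Btil n q) = m
        ∧ Observable
            (Matrix.fromRows (C q * (Btil n q)ᵀ) (Ctil n adj q))
            (Atil A B F
              + ∑ i : Fin m,
                  Btil n i * (K i * (C i * (Btil n i)ᵀ) + Hblk adj H i * Ctil n adj i)) := by
  have hrank_open (q : Fin m) :=
    polynomiallyOpen_rank_ctrbMat (Atil A B F) (gainMap C adj) (Btil n q) m
  have hobs_open (q : Fin m) := polynomiallyOpen_observable (Atil A B F) (gainMap C adj)
    (fromRows (C q * (Btil n q)ᵀ) (Ctil n adj q))
  obtain ⟨⟨K, H⟩, hKH⟩ := PolynomiallyOpen.exists_forall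
    (fun q => (hrank_open q).and (hobs_open q)) fun q => (hrank_open q).exists_and (hobs_open q)
      (exists_gains_rank_ctrbMat_eq_card A B C F adj q (hconn q))
      (exists_gains_observable A B C F adj hconn hjo q)
  refine ⟨K, H, fun q => ?_⟩
  obtain ⟨hrank, hobs⟩ := hKH q
  have hcard : Fintype.card (Fin m × Fin n) = m * Fintype.card (Fin n) := by
    rw [Fintype.card_prod, Fintype.card_fin m]
  have hn' : 0 < Fintype.card (Fin n) := by rwa [Fintype.card_fin]
  have hm_le : m ≤ Fintype.card (Fin m × Fin n) := hcard ▸ Nat.le_mul_of_pos_right m hn'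
  exact ⟨rank_ctrbMat_eq_card_of_le hm_le hrank,
    ctrlIndex_eq_of_card_eq_mul q.pos hn' hcard hrank, hobs⟩

/-- **Proposition 1.** There are matrices `Kᵢ`, `H_{ij}` (`j ∈ 𝒩ᵢ`)
such that for every `q`, the open-loop error system
`M = Ã + Σᵢ B̃ᵢ(KᵢĈᵢ + HᵢC̃ᵢ)` is controllable by `ũ_q` (through `B̃_q`) with
controllability index `m`, and observable through `ỹ_q = col{Ĉ_q, C̃_q}`. -/
theorem open_loop_error_system_ctrb_obs
    {n m : ℕ} (hn : 0 < n) (hm : 1 < m)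
    (mdim pdim : Fin m → ℕ)
    (A : Matrix (Fin n) (Fin n) ℝ)
    (B : ∀ i : Fin m, Matrix (Fin n) (Fin (mdim i)) ℝ)
    (C : ∀ i : Fin m, Matrix (Fin (pdim i)) (Fin n) ℝ)
    (adj : Fin m → Fin m → Prop) [DecidableRel adj]
    (hself : ∀ i, adj i i)
    (hconn : ∀ i j : Fin m, Relation.ReflTransGen adj i j)
    (hBne : ∀ i, B i ≠ 0) (hCne : ∀ i, C i ≠ 0)
    (hjc : Controllable A
      (Matrix.of fun k (p : Σ i : Fin m, Fin (mdim i)) => B p.1 k p.2))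
    (hjo : Observable
      (Matrix.of fun (p : Σ i : Fin m, Fin (pdim i)) k => C p.1 p.2 k) A)
    (F : ∀ i : Fin m, Matrix (Fin (mdim i)) (Fin n) ℝ) :
    ∃ (K : ∀ i : Fin m, Matrix (Fin n) (Fin (pdim i)) ℝ)
      (H : Fin m → Fin m → Matrix (Fin n) (Fin n) ℝ),
      ∀ q : Fin m,
        Controllable
          (Atil A B F
            + ∑ i : Fin m,
                Btil n i * (K i * (C i * (Btil n i)ᵀ) + Hblk adj H i * Ctil n adj i))
          (Btil n q)
        ∧ ctrlIndex
            (Atil A B F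
              + ∑ i : Fin m,
                  Btil n i * (K i * (C i * (Btil n i)ᵀ) + Hblk adj H i * Ctil n adj i))
            (Btil n q) = m
        ∧ Observable
            (Matrix.fromRows (C q * (Btil n q)ᵀ) (Ctil n adj q))
            (Atil A B F
              + ∑ i : Fin m,
                  Btil n i * (K i * (C i * (Btil n i)ᵀ) + Hblk adj H i * Ctil n adj i)) :=
  open_loop_error_system_ctrb_obs_general hn mdim pdim A B C adj hconn hjo F
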